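/- Let M ≥ 1 and T ≥ 1 be integers and let the initial ages h_{1,1} ≥ h_{1,2} ≥ … ≥ h_{1,M} be weakly decreasing positive integers. Let h^G denote the ages under the round-robin schedule and h^s the ages under an arbitrary schedule s satisfying |s_k| ≤ T for every k, both started from the same initial ages. Then for every frame k ≥ 1, Σ_{i=1}^M h^G_{k,i} ≤ Σ_{i=1}^M h^s_{k,i}; consequently, for every horizon K ≥ 1, Σ_{k=1}^K Σ_{i=1}^M h^G_{k,i} ≤ Σ_{k=1}^K Σ_{i=1}^M h^s_{k,i}. That is, in a symmetric network with error-free channels the Greedy (round-robin) policy attains the minimum sum Age of Information among all schedules. -/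

import Mathlib

/-- The age process: `ageP h1 s k i` is the age of client `i` at frame `k` (frames
are 1-indexed; `ageP h1 s 1 = h1`).  The ages evolve by `h_{k+1,i} = 1` if `i ∈ s k`
and `h_{k+1,i} = h_{k,i} + 1` otherwise. -/
def ageP (h1 : ℕ → ℕ) (s : ℕ → Finset ℕ) : ℕ → ℕ → ℕ
  | 0, i => h1 i
  | 1, i => h1 i
  | (k+2), i => if i ∈ s (k+1) then 1 else ageP h1 s (k+1) i + 1

/-- `rrClient M n = (n mod M) + 1`, the client served in the `n`-th round-robin slot. -/
def rrClient (M n : ℕ) : ℕ := n % M + 1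

/-- The round-robin schedule: in frame `k ≥ 1` the `L = min M T` distinct clients
`σ((k-1)L), …, σ(kL - 1)` are served. -/
def rrSched (M T : ℕ) (k : ℕ) : Finset ℕ :=
  (Finset.range (min M T)).image (fun j => rrClient M ((k - 1) * min M T + j))

/-!
Compare schedules through the number of clients of age more than `a`, for all thresholds `a` at
once. One frame turns the clients of age more than `a` that are not served into those of age more
than `a + 1`. Serving `T` clients therefore lowers the count by at most `T`, and serving `T` oldest
clients lowers it by exactly `T`, or to zero. By induction on the frame, any schedule that always
serves oldest clients has the smallest counts, hence the smallest sum of ages, which is the sum of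
the counts over all thresholds. Round-robin is such a schedule: at the start of each frame the ages
are weakly decreasing along the clients of the next `M` slots.
-/

open Finset

section LayerCake

variable {ι : Type*} (s : Finset ι)

theorem sum_eq_sum_range_card_filter_lt {f : ι → ℕ} {B : ℕ} (hB : ∀ i ∈ s, f i ≤ B) :
    ∑ i ∈ s, f i = ∑ a ∈ range B, #{i ∈ s | a < f i} := by
  have card_below : ∀ i ∈ s, f i = #{a ∈ range B | a < f i} := fun i hi ↦ by
    have : {a ∈ range B | a < f i} = range (f i) := by
      ext a
      simpa using fun h : a < f i ↦ h.trans_le (hB i hi)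
    rw [this, card_range]
  exact (sum_congr rfl card_below).trans
    (sum_card_bipartiteAbove_eq_sum_card_bipartiteBelow fun i a ↦ a < f i)

theorem sum_le_sum_of_card_filter_lt_le {f g : ι → ℕ}
    (h : ∀ a, #{i ∈ s | a < f i} ≤ #{i ∈ s | a < g i}) : ∑ i ∈ s, f i ≤ ∑ i ∈ s, g i := by
  have le_sup : ∀ i ∈ s, f i ≤ s.sup (f ⊔ g) ∧ g i ≤ s.sup (f ⊔ g) := fun i hi ↦
    sup_le_iff.mp (Finset.le_sup (f := f ⊔ g) hi)
  rw [sum_eq_sum_range_card_filter_lt s fun i hi ↦ (le_sup i hi).1,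
    sum_eq_sum_range_card_filter_lt s fun i hi ↦ (le_sup i hi).2]
  exact sum_le_sum fun a _ ↦ h a

end LayerCake

/-- `t` is a possible choice of the Greedy policy with `T` slots when the clients `S` have ages `h`:
it consists of `T` clients of largest age, ties broken arbitrarily, or of all the clients if there
are fewer than `T`. -/
structure IsGreedyChoice {ι α : Type*} [LE α] (S : Finset ι) (T : ℕ) (h : ι → α)
    (t : Finset ι) : Prop where
  subset : t ⊆ S
  card_eq : #t = min #S T
  le_of_notMem : ∀ i ∈ t, ∀ j ∈ S, j ∉ t → h j ≤ h i

theorem IsGreedyChoice.card_filter_lt_sdiff_le {ι α : Type*} [DecidableEq ι] [Preorder α]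
    [DecidableLT α] {S t : Finset ι} {T : ℕ} {h : ι → α} (ht : IsGreedyChoice S T h t) (a : α) :
    #({i ∈ S | a < h i} \ t) ≤ #{i ∈ S | a < h i} - T := by
  obtain hempty | ⟨j, hj⟩ := ({i ∈ S | a < h i} \ t).eq_empty_or_nonempty
  · simp [hempty]
  · simp only [mem_sdiff, mem_filter] at hj
    obtain ⟨⟨hjS, haj⟩, hjt⟩ := hj
    have subset_old : t ⊆ {i ∈ S | a < h i} := fun i hi ↦
      mem_filter.mpr ⟨ht.subset hi, haj.trans_le (ht.le_of_notMem i hi j hjS hjt)⟩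
    have card_old_le : #{i ∈ S | a < h i} ≤ #S := card_filter_le _ _
    rw [card_sdiff_of_subset subset_old, ht.card_eq]
    omega

section AgeProcess

variable {h1 : ℕ → ℕ} {s : ℕ → Finset ℕ}

theorem ageP_add_two_of_mem {k i : ℕ} (hi : i ∈ s (k + 1)) : ageP h1 s (k + 2) i = 1 :=
  if_pos hi

theorem ageP_add_two_of_notMem {k i : ℕ} (hi : i ∉ s (k + 1)) :
    ageP h1 s (k + 2) i = ageP h1 s (k + 1) i + 1 :=
  if_neg hi

variable (h1 s)

theorem one_le_ageP_add_two (k i : ℕ) : 1 ≤ ageP h1 s (k + 2) i := by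
  by_cases hi : i ∈ s (k + 1)
  · exact (ageP_add_two_of_mem hi).ge
  · exact (ageP_add_two_of_notMem hi).ge.trans' (Nat.le_add_left 1 _)

theorem filter_succ_lt_ageP_add_two (S : Finset ℕ) (k a : ℕ) :
    {i ∈ S | a + 1 < ageP h1 s (k + 2) i} = {i ∈ S | a < ageP h1 s (k + 1) i} \ s (k + 1) := by
  ext i
  rw [mem_filter, mem_sdiff, mem_filter]
  by_cases hi : i ∈ s (k + 1)
  · simp [ageP_add_two_of_mem hi, hi]
  · simp [ageP_add_two_of_notMem hi, hi]

variable {h1 s} {S : Finset ℕ} {T : ℕ} {g : ℕ → Finset ℕ}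

theorem card_filter_lt_ageP_le_of_isGreedyChoice
    (hg : ∀ k, IsGreedyChoice S T (ageP h1 g (k + 1)) (g (k + 1)))
    (hs : ∀ k, #(s k) ≤ T) (k a : ℕ) :
    #{i ∈ S | a < ageP h1 g (k + 1) i} ≤ #{i ∈ S | a < ageP h1 s (k + 1) i} := by
  induction k generalizing a with
  | zero => rfl
  | succ k ih =>
    cases a with
    | zero =>
      exact card_le_card (monotone_filter_right S fun i _ _ ↦ one_le_ageP_add_two h1 s k i)
    | succ a =>
      rw [filter_succ_lt_ageP_add_two, filter_succ_lt_ageP_add_two]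
      calc #({i ∈ S | a < ageP h1 g (k + 1) i} \ g (k + 1))
          ≤ #{i ∈ S | a < ageP h1 g (k + 1) i} - T := (hg k).card_filter_lt_sdiff_le a
        _ ≤ #{i ∈ S | a < ageP h1 s (k + 1) i} - #(s (k + 1)) :=
          tsub_le_tsub (ih a) (hs (k + 1))
        _ ≤ #({i ∈ S | a < ageP h1 s (k + 1) i} \ s (k + 1)) := le_card_sdiff _ _

theorem sum_ageP_le_of_isGreedyChoice
    (hg : ∀ k, IsGreedyChoice S T (ageP h1 g (k + 1)) (g (k + 1)))
    (hs : ∀ k, #(s k) ≤ T) (k : ℕ) :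
    ∑ i ∈ S, ageP h1 g (k + 1) i ≤ ∑ i ∈ S, ageP h1 s (k + 1) i :=
  sum_le_sum_of_card_filter_lt_le S (card_filter_lt_ageP_le_of_isGreedyChoice hg hs k)

end AgeProcess

section RoundRobin

variable (M T : ℕ)

theorem rrClient_injOn_Ico (n : ℕ) : Set.InjOn (rrClient M) (Ico n (n + M)) :=
  (add_left_injective 1).injOn.comp (Nat.mod_injOn_Ico n M) (Set.mapsTo_univ _ _)

theorem image_rrClient_Ico (n : ℕ) : (Ico n (n + M)).image (rrClient M) = Icc 1 M :=
  calc (Ico n (n + M)).image (rrClient M)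
      = ((Ico n (n + M)).image (· % M)).image (· + 1) := by
        rw [image_image]
        rfl
    _ = Icc 1 M := by
      rw [Nat.image_Ico_mod, range_eq_Ico, image_add_right_Ico, zero_add,
        Ico_add_one_right_eq_Icc]

theorem rrClient_add_self (n : ℕ) : rrClient M (n + M) = rrClient M n := by
  rw [rrClient, rrClient, Nat.add_mod_right]

theorem rrSched_succ (n : ℕ) : rrSched M T (n + 1) =
    (Ico (n * min M T) (n * min M T + min M T)).image (rrClient M) := by
  have slots_eq : Ico (n * min M T) (n * min M T + min M T) =
      (range (min M T)).image (n * min M T + ·) := by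
    rw [range_eq_Ico, image_add_left_Ico, add_zero]
  rw [slots_eq, image_image, rrSched, Nat.add_sub_cancel]
  rfl

theorem Ico_min_subset_Ico (n : ℕ) : Ico n (n + min M T) ⊆ Ico n (n + M) :=
  Ico_subset_Ico_right (Nat.add_le_add_left (min_le_left M T) n)

variable {M T}

theorem rrClient_mem_rrSched_succ_iff {n p : ℕ} (hp : p ∈ Ico (n * min M T) (n * min M T + M)) :
    rrClient M p ∈ rrSched M T (n + 1) ↔ p < n * min M T + min M T := by
  rw [rrSched_succ, ← mem_coe, coe_image, (rrClient_injOn_Ico M _).mem_image_iff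
    (coe_subset.mpr (Ico_min_subset_Ico M T _)) hp, mem_coe, mem_Ico,
    and_iff_right (mem_Ico.mp hp).1]

variable {h1 : ℕ → ℕ}

theorem antitoneOn_ageP_rrSched (hdec : AntitoneOn h1 (Set.Icc 1 M)) (n : ℕ) :
    AntitoneOn (fun p ↦ ageP h1 (rrSched M T) (n + 1) (rrClient M p))
      (Ico (n * min M T) (n * min M T + M)) := by
  induction n with
  | zero =>
    intro p _ q hq hpq
    have hqM : q < M := by simpa using hq
    simp only [ageP, rrClient, Nat.mod_eq_of_lt hqM, Nat.mod_eq_of_lt (hpq.trans_lt hqM)]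
    exact hdec ⟨by omega, by omega⟩ ⟨by omega, by omega⟩ (by omega)
  | succ n ih =>
    intro p hp q hq hpq
    rw [coe_Ico, Set.mem_Ico, add_one_mul] at hp hq
    obtain hqM | hqM := lt_or_ge q (n * min M T + M)
    · have hp' : p ∈ Ico (n * min M T) (n * min M T + M) := mem_Ico.mpr (by omega)
      have hq' : q ∈ Ico (n * min M T) (n * min M T + M) := mem_Ico.mpr (by omega)
      have p_notMem := (rrClient_mem_rrSched_succ_iff hp').not.mpr hp.1.not_gt
      have q_notMem := (rrClient_mem_rrSched_succ_iff hq').not.mpr hq.1.not_gt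
      calc ageP h1 (rrSched M T) (n + 2) (rrClient M q)
          = ageP h1 (rrSched M T) (n + 1) (rrClient M q) + 1 := ageP_add_two_of_notMem q_notMem
        _ ≤ ageP h1 (rrSched M T) (n + 1) (rrClient M p) + 1 :=
          Nat.add_le_add_right (ih hp' hq' hpq) 1
        _ = ageP h1 (rrSched M T) (n + 2) (rrClient M p) := (ageP_add_two_of_notMem p_notMem).symm
    · have q_mem : rrClient M q ∈ rrSched M T (n + 1) := by
        rw [← Nat.sub_add_cancel (show M ≤ q by omega), rrClient_add_self,
          rrClient_mem_rrSched_succ_iff (mem_Ico.mpr (by omega))]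
        omega
      calc ageP h1 (rrSched M T) (n + 2) (rrClient M q) = 1 := ageP_add_two_of_mem q_mem
        _ ≤ ageP h1 (rrSched M T) (n + 2) (rrClient M p) := one_le_ageP_add_two ..

theorem isGreedyChoice_rrSched_succ (hdec : AntitoneOn h1 (Set.Icc 1 M)) (n : ℕ) :
    IsGreedyChoice (Icc 1 M) T (ageP h1 (rrSched M T) (n + 1)) (rrSched M T (n + 1)) where
  subset := by
    rw [rrSched_succ, ← image_rrClient_Ico M (n * min M T)]
    exact image_subset_image (Ico_min_subset_Ico M T _)
  card_eq := by
    have hinj := (rrClient_injOn_Ico M (n * min M T)).mono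
      (coe_subset.mpr (Ico_min_subset_Ico M T _))
    rw [rrSched_succ, card_image_of_injOn hinj, Nat.card_Ico, Nat.card_Icc]
    omega
  le_of_notMem i hi j hj hjt := by
    rw [← image_rrClient_Ico M (n * min M T), mem_image] at hj
    obtain ⟨q, hq, rfl⟩ := hj
    rw [rrClient_mem_rrSched_succ_iff hq, not_lt] at hjt
    rw [rrSched_succ, mem_image] at hi
    obtain ⟨p, hp, rfl⟩ := hi
    exact antitoneOn_ageP_rrSched hdec n (Ico_min_subset_Ico M T _ hp) hq
      ((mem_Ico.mp hp).2.le.trans hjt)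

theorem sum_ageP_rrSched_le (hdec : AntitoneOn h1 (Set.Icc 1 M)) {s : ℕ → Finset ℕ}
    (hs : ∀ k, #(s k) ≤ T) {k : ℕ} (hk : 1 ≤ k) :
    ∑ i ∈ Icc 1 M, ageP h1 (rrSched M T) k i ≤ ∑ i ∈ Icc 1 M, ageP h1 s k i := by
  obtain ⟨n, rfl⟩ := Nat.exists_eq_add_of_le' hk
  exact sum_ageP_le_of_isGreedyChoice (isGreedyChoice_rrSched_succ hdec) hs n

end RoundRobin

/-- Optimality of Greedy (round-robin) for error-free channels: starting from weakly
decreasing positive initial ages, the round-robin schedule attains, in every frame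
`k ≥ 1`, a sum of ages no larger than that of any feasible schedule (at most `T`
deliveries per frame); consequently its cumulative sum AoI over any horizon `K` is
minimal. -/
theorem stmt2 (M T : ℕ) (hM : 1 ≤ M) (hT : 1 ≤ T)
    (h1 : ℕ → ℕ) (hpos : ∀ i ∈ Finset.Icc 1 M, 1 ≤ h1 i)
    (hdec : ∀ i j : ℕ, 1 ≤ i → i ≤ j → j ≤ M → h1 j ≤ h1 i)
    (s : ℕ → Finset ℕ) (hs : ∀ k, s k ⊆ Finset.Icc 1 M)
    (hcard : ∀ k, (s k).card ≤ T) :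
    (∀ k : ℕ, 1 ≤ k →
      ∑ i ∈ Finset.Icc 1 M, ageP h1 (rrSched M T) k i
        ≤ ∑ i ∈ Finset.Icc 1 M, ageP h1 s k i) ∧
    (∀ K : ℕ, 1 ≤ K →
      ∑ k ∈ Finset.Icc 1 K, ∑ i ∈ Finset.Icc 1 M, ageP h1 (rrSched M T) k i
        ≤ ∑ k ∈ Finset.Icc 1 K, ∑ i ∈ Finset.Icc 1 M, ageP h1 s k i) := by
  have frame_le : ∀ k : ℕ, 1 ≤ k →
      ∑ i ∈ Finset.Icc 1 M, ageP h1 (rrSched M T) k i ≤ ∑ i ∈ Finset.Icc 1 M, ageP h1 s k i :=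
    fun _ ↦ sum_ageP_rrSched_le (fun i hi j hj hij ↦ hdec i j hi.1 hij hj.2) hcard
  exact ⟨frame_le, fun K _ ↦ Finset.sum_le_sum fun k hk ↦ frame_le k (Finset.mem_Icc.mp hk).1⟩
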